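/- Let T, the constants, and a gadget system satisfying (G1)–(G9) be as in the context, and let A₃ ⊆ A₁ with a partition {B₁, …, B_{σ₃t}} of A₃ satisfy: |B_i| = 10k for every i ∈ [σ₃t]; for every i ∈ [σ₃t], α ∈ B_i and u ∈ S(α), the vertex u has at least τ₃kt out-neighbours and at least τ₃kt in-neighbours that are eligible for B_i in W(A₃ ∖ B_i) ∖ X(α); and for every i ∈ [σ₃t] there are at least n/10 vertices in V_good ∩ W(A₃) that are eligible for B_i in W(A₃). Then there exist pairwise disjoint vertex sets V₁, …, V_t such that: (i) 2k ≤ |V_i| ≤ n/t for every i ∈ [t]; (ii) T[V_i] is strongly k-connected for every i ∈ [t]; (iii) each V_i contains at least 10k of the sets U(α) with α ∈ A₃; (iv) setting Z := V ∖ (V₁ ∪ … ∪ V_t), for every i ∈ [t] there are at least n/100 vertices in Z ∩ V_good that have at least k out-neighbours and at least k in-neighbours in V_i. -/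

import Mathlib

open Finset

namespace TournamentPartition

/-! ### Basic constants from the paper -/

def rho : ℕ := 10 ^ 4
def sigma1 : ℕ := 10 ^ 60
def sigma2 : ℕ := 10 ^ 4
def sigma3 : ℕ := 10

/-- `s` contains at least `m` elements satisfying `P`. -/
def ManyIn {α : Type*} (s : Finset α) (m : ℝ) (P : α → Prop) : Prop :=
  ∃ s' : Finset α, s' ⊆ s ∧ m ≤ (s'.card : ℝ) ∧ ∀ x ∈ s', P x

section Defs

variable {V I : Type*}

/-- `E u v` means that the edge between `u` and `v` is directed from `u` to `v`. -/
def IsTournament (E : V → V → Prop) : Prop :=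
  (∀ v, ¬ E v v) ∧ ∀ u v : V, u ≠ v → (E u v ↔ ¬ E v u)

/-- There is a directed path from `u` to `v` all of whose vertices lie in `S`. -/
def ReachWithin (E : V → V → Prop) (S : Set V) (u v : V) : Prop :=
  Relation.ReflTransGen (fun a b => a ∈ S ∧ b ∈ S ∧ E a b) u v

def StronglyConnectedOn (E : V → V → Prop) (S : Set V) : Prop :=
  ∀ u ∈ S, ∀ v ∈ S, ReachWithin E S u v

/-- A directed path, as a list of distinct vertices with consecutive edges. -/
def IsDiPath (E : V → V → Prop) (l : List V) : Prop :=
  l ≠ [] ∧ l.Nodup ∧ l.Chain' E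

variable [Fintype V] [DecidableEq V]

/-- The set `S` induces a strongly `k`-connected subtournament. -/
def StronglyKConnectedOn (E : V → V → Prop) (k : ℕ) (S : Finset V) : Prop :=
  k + 1 ≤ S.card ∧
    ∀ Z : Finset V, Z.card ≤ k → StronglyConnectedOn E ((S \ Z : Finset V) : Set V)

def StronglyKConnected (E : V → V → Prop) (k : ℕ) : Prop :=
  StronglyKConnectedOn E k Finset.univ

def outN (E : V → V → Prop) [DecidableRel E] (u : V) : Finset V :=
  Finset.univ.filter fun v => E u v

def inN (E : V → V → Prop) [DecidableRel E] (u : V) : Finset V :=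
  Finset.univ.filter fun v => E v u

/-- A system of gadgets `U(α)` with special sets `S⁺(α), S⁻(α) ⊆ S(α) ⊆ U(α)`,
exceptional sets `X(α)` and special vertices `s⁺(α), s⁻(α) ∈ S(α)`. -/
structure GadgetSystem (V I : Type*) where
  U : I → Finset V
  S : I → Finset V
  Sp : I → Finset V
  Sm : I → Finset V
  X : I → Finset V
  sp : I → V
  sm : I → V
  sp_mem : ∀ α, sp α ∈ S α
  sm_mem : ∀ α, sm α ∈ S α
  Sp_subset : ∀ α, Sp α ⊆ S α
  Sm_subset : ∀ α, Sm α ⊆ S α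
  S_subset : ∀ α, S α ⊆ U α

variable [Fintype I] [DecidableEq I]

def Vokay (G : GadgetSystem V I) : Finset V :=
  Finset.univ \ Finset.univ.biUnion G.S

/-- Vertices of `V_okay` having no out-neighbour in `S⁻(α)` for at least `k*t` indices `α`. -/
def VbadP (E : V → V → Prop) [DecidableRel E] (G : GadgetSystem V I) (k t : ℕ) : Finset V :=
  (Vokay G).filter fun u =>
    k * t ≤ (Finset.univ.filter fun α : I => ∀ v ∈ G.Sm α, ¬ E u v).card

/-- Vertices of `V_okay` having no in-neighbour in `S⁺(α)` for at least `k*t` indices `α`. -/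
def VbadM (E : V → V → Prop) [DecidableRel E] (G : GadgetSystem V I) (k t : ℕ) : Finset V :=
  (Vokay G).filter fun u =>
    k * t ≤ (Finset.univ.filter fun α : I => ∀ v ∈ G.Sp α, ¬ E v u).card

def Vbad (E : V → V → Prop) [DecidableRel E] (G : GadgetSystem V I) (k t : ℕ) : Finset V :=
  VbadP E G k t ∩ VbadM E G k t

def VgoodP (E : V → V → Prop) [DecidableRel E] (G : GadgetSystem V I) (k t : ℕ) : Finset V :=
  Vokay G \ VbadP E G k t

def VgoodM (E : V → V → Prop) [DecidableRel E] (G : GadgetSystem V I) (k t : ℕ) : Finset V :=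
  Vokay G \ VbadM E G k t

def Vgood (E : V → V → Prop) [DecidableRel E] (G : GadgetSystem V I) (k t : ℕ) : Finset V :=
  VgoodP E G k t ∩ VgoodM E G k t

/-- `W(C) = V ∖ ⋃_{α ∈ C} U(α)`. -/
def Wof (G : GadgetSystem V I) (C : Finset I) : Finset V :=
  Finset.univ \ C.biUnion G.U

def NokayP (E : V → V → Prop) [DecidableRel E] (G : GadgetSystem V I) (u : V) : Finset V :=
  outN E u ∩ Vokay G

def NokayM (E : V → V → Prop) [DecidableRel E] (G : GadgetSystem V I) (u : V) : Finset V :=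
  inN E u ∩ Vokay G

def NgoodP (E : V → V → Prop) [DecidableRel E] (G : GadgetSystem V I) (k t : ℕ) (u : V) :
    Finset V :=
  outN E u ∩ VgoodP E G k t

def NgoodM (E : V → V → Prop) [DecidableRel E] (G : GadgetSystem V I) (k t : ℕ) (u : V) :
    Finset V :=
  inN E u ∩ Vgood E G k t

/-! ### Properties (G1)–(G9) -/

def CondG1 (G : GadgetSystem V I) : Prop :=
  ∀ α β : I, α ≠ β → Disjoint (G.U α) (G.U β)

def CondG2 (G : GadgetSystem V I) (k t : ℕ) : Prop :=
  ∀ α : I, (G.S α).card ≤ rho ∧ (G.X α).card ≤ rho * sigma1 * k * t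

def CondG3 (E : V → V → Prop) (G : GadgetSystem V I) : Prop :=
  ∀ α : I, ∀ u ∈ G.Sm α, ∀ v ∈ G.Sp α, ReachWithin E (G.U α : Set V) u v

def CondG4 (E : V → V → Prop) (G : GadgetSystem V I) : Prop :=
  ∀ α : I, ∀ x : V, x ∉ G.X α →
    (E x (G.sp α) → ∀ u ∈ G.U α \ G.S α, E x u) ∧
    (E (G.sm α) x → ∀ u ∈ G.U α \ G.S α, E u x)

def CondG5 (E : V → V → Prop) [DecidableRel E] (G : GadgetSystem V I) (k t : ℕ) : Prop :=
  ∀ u ∈ Vokay G,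
    10 ^ 12 * (VbadP E G k t).card ≤ (outN E u).card ∧
    10 ^ 12 * (VbadM E G k t).card ≤ (inN E u).card

/-- Properties (G1)–(G5) of a gadget system. -/
def GadgetHyp (E : V → V → Prop) [DecidableRel E] (G : GadgetSystem V I) (k t : ℕ) : Prop :=
  CondG1 G ∧ CondG2 G k t ∧ CondG3 E G ∧ CondG4 E G ∧ CondG5 E G k t

def CondG6 (E : V → V → Prop) [DecidableRel E] (G : GadgetSystem V I) (k t : ℕ) : Prop :=
  (Fintype.card V : ℝ) / 2 ≤ ((Vgood E G k t).card : ℝ)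

def CondG7 (E : V → V → Prop) [DecidableRel E] (G : GadgetSystem V I) (k t τ₁ : ℕ) : Prop :=
  ∀ u ∈ Vokay G,
    max ((10 : ℝ) ^ 11 * ((VbadP E G k t).card : ℝ)) (((τ₁ * k * t : ℕ) : ℝ) / 2)
      ≤ ((outN E u ∩ VgoodP E G k t).card : ℝ)

def CondG8 (E : V → V → Prop) [DecidableRel E] (G : GadgetSystem V I) (k t τ₁ : ℕ) : Prop :=
  ∀ u ∈ Vokay G,
    max ((10 : ℝ) ^ 11 * ((VbadM E G k t).card : ℝ)) (((τ₁ * k * t : ℕ) : ℝ) / 2)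
      ≤ ((inN E u ∩ Vgood E G k t).card : ℝ)

def CondG9 (E : V → V → Prop) [DecidableRel E] (G : GadgetSystem V I) (k t τ₁ : ℕ) : Prop :=
  ∀ u : V,
    max ((10 : ℝ) ^ 11 * (((Finset.univ \ Vokay G).card : ℕ) : ℝ)) (((τ₁ * k * t : ℕ) : ℝ) / 2)
      ≤ ((outN E u ∩ Vokay G).card : ℝ) ∧
    max ((10 : ℝ) ^ 11 * (((Finset.univ \ Vokay G).card : ℕ) : ℝ)) (((τ₁ * k * t : ℕ) : ℝ) / 2)
      ≤ ((inN E u ∩ Vokay G).card : ℝ)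

/-- Properties (G6)–(G9) of a gadget system. -/
def GadgetHyp2 (E : V → V → Prop) [DecidableRel E] (G : GadgetSystem V I) (k t τ₁ : ℕ) :
    Prop :=
  CondG6 E G k t ∧ CondG7 E G k t τ₁ ∧ CondG8 E G k t τ₁ ∧ CondG9 E G k t τ₁

/-! ### Available vertices -/

def AvailA1 (E : V → V → Prop) [DecidableRel E] (G : GadgetSystem V I) (k t : ℕ)
    (W : Finset V) (u : V) : Prop :=
  u ∈ Vgood E G k t ∩ W

def AvailA2 (E : V → V → Prop) [DecidableRel E] (G : GadgetSystem V I) (k t τ₂ : ℕ)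
    (W : Finset V) (u : V) : Prop :=
  u ∈ (VgoodP E G k t \ VgoodM E G k t) ∩ W ∧
    ManyIn (inN E u) ((τ₂ * k * t : ℕ) : ℝ) (AvailA1 E G k t W)

def AvailA3 (E : V → V → Prop) [DecidableRel E] (G : GadgetSystem V I) (k t τ₂ : ℕ)
    (W : Finset V) (u : V) : Prop :=
  u ∈ (VgoodM E G k t \ VgoodP E G k t) ∩ W ∧
    ManyIn (outN E u) ((τ₂ * k * t : ℕ) : ℝ)
      (fun v => AvailA1 E G k t W v ∨ AvailA2 E G k t τ₂ W v)

def AvailA4 (E : V → V → Prop) [DecidableRel E] (G : GadgetSystem V I) (k t τ₂ : ℕ)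
    (W : Finset V) (u : V) : Prop :=
  u ∈ Vbad E G k t ∩ W ∧
    ManyIn (outN E u) ((τ₂ * k * t : ℕ) : ℝ)
      (fun v => AvailA1 E G k t W v ∨ AvailA2 E G k t τ₂ W v) ∧
    ManyIn (inN E u) ((τ₂ * k * t : ℕ) : ℝ) (AvailA1 E G k t W)

/-- `u` is available (for `α`) with respect to a family `𝒜`, where `W = W(𝒜 ∖ {α})`. -/
def Available (E : V → V → Prop) [DecidableRel E] (G : GadgetSystem V I) (k t τ₂ : ℕ)
    (W : Finset V) (u : V) : Prop :=
  AvailA1 E G k t W u ∨ AvailA2 E G k t τ₂ W u ∨ AvailA3 E G k t τ₂ W u ∨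
    AvailA4 E G k t τ₂ W u

/-! ### Eligible and helpful vertices -/

/-- Indices `α ∈ 𝒜` such that `u` has no out-neighbour in `S⁻(α)`. -/
def MissOut (E : V → V → Prop) [DecidableRel E] (G : GadgetSystem V I) (𝒜 : Finset I)
    (u : V) : Finset I :=
  𝒜.filter fun α => ∀ v ∈ G.Sm α, ¬ E u v

/-- Indices `α ∈ 𝒜` such that `u` has no in-neighbour in `S⁺(α)`. -/
def MissIn (E : V → V → Prop) [DecidableRel E] (G : GadgetSystem V I) (𝒜 : Finset I)
    (u : V) : Finset I :=
  𝒜.filter fun α => ∀ v ∈ G.Sp α, ¬ E v u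

def Nice1 (E : V → V → Prop) [DecidableRel E] (G : GadgetSystem V I) (k t : ℕ)
    (𝒜 : Finset I) (W : Finset V) (u : V) : Prop :=
  u ∈ Vgood E G k t ∩ W ∧ (MissOut E G 𝒜 u).card ≤ k ∧ (MissIn E G 𝒜 u).card ≤ k

def Nice2 (E : V → V → Prop) [DecidableRel E] (G : GadgetSystem V I) (k t : ℕ) (m : ℝ)
    (𝒜 : Finset I) (W : Finset V) (u : V) : Prop :=
  u ∈ (VgoodP E G k t \ VgoodM E G k t) ∩ W ∧ (MissOut E G 𝒜 u).card ≤ k ∧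
    ManyIn (inN E u) m (Nice1 E G k t 𝒜 W)

def Nice3 (E : V → V → Prop) [DecidableRel E] (G : GadgetSystem V I) (k t : ℕ) (m : ℝ)
    (𝒜 : Finset I) (W : Finset V) (u : V) : Prop :=
  u ∈ (VgoodM E G k t \ VgoodP E G k t) ∩ W ∧ (MissIn E G 𝒜 u).card ≤ k ∧
    ManyIn (outN E u) m (fun v => Nice1 E G k t 𝒜 W v ∨ Nice2 E G k t m 𝒜 W v)

def Nice4 (E : V → V → Prop) [DecidableRel E] (G : GadgetSystem V I) (k t : ℕ) (m : ℝ)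
    (𝒜 : Finset I) (W : Finset V) (u : V) : Prop :=
  u ∈ Vbad E G k t ∩ W ∧
    ManyIn (inN E u) m (Nice1 E G k t 𝒜 W) ∧
    ManyIn (outN E u) m (fun v => Nice1 E G k t 𝒜 W v ∨ Nice2 E G k t m 𝒜 W v)

def NiceFor (E : V → V → Prop) [DecidableRel E] (G : GadgetSystem V I) (k t : ℕ) (m : ℝ)
    (𝒜 : Finset I) (W : Finset V) (u : V) : Prop :=
  Nice1 E G k t 𝒜 W u ∨ Nice2 E G k t m 𝒜 W u ∨ Nice3 E G k t m 𝒜 W u ∨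
    Nice4 E G k t m 𝒜 W u

/-- `u` is eligible for `𝒜` in `W`. -/
def Eligible (E : V → V → Prop) [DecidableRel E] (G : GadgetSystem V I) (k t τ₃ : ℕ)
    (𝒜 : Finset I) (W : Finset V) (u : V) : Prop :=
  NiceFor E G k t ((τ₃ * k * t : ℕ) : ℝ) 𝒜 W u

/-- `u` is helpful for `𝒜` in `W`. -/
def Helpful (E : V → V → Prop) [DecidableRel E] (G : GadgetSystem V I) (k t : ℕ)
    (𝒜 : Finset I) (W : Finset V) (u : V) : Prop :=
  NiceFor E G k t (k : ℝ) 𝒜 W u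

end Defs

noncomputable def phi0 (τ₁ : ℕ) : ℝ := (τ₁ : ℝ) / 4
noncomputable def phi1 (τ₁ : ℕ) : ℝ := phi0 τ₁ / (2 ^ 6 * (rho : ℝ))
noncomputable def phi2 (τ₁ : ℕ) : ℝ := phi1 τ₁ / (2 ^ 14 * (rho : ℝ) ^ 2)
noncomputable def phi3 (τ₁ : ℕ) : ℝ := phi2 τ₁ / (2 ^ 14 * (rho : ℝ) ^ 2)

section Frequency

variable {Ω ι V Γ : Type*} [Fintype Ω]

open Classical in
/-- The proportion of points of a finite type that satisfy `p`. -/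
noncomputable def freq (p : Ω → Prop) : ℝ := #{c | p c} / Fintype.card Ω

lemma freq_mono {p q : Ω → Prop} (h : ∀ c, p c → q c) : freq p ≤ freq q := by
  classical
  unfold freq
  gcongr
  exact h _

lemma freq_or_le (p q : Ω → Prop) : freq (fun c => p c ∨ q c) ≤ freq p + freq q := by
  classical
  unfold freq
  rw [← add_div]
  simp only [filter_or]
  gcongr
  exact_mod_cast card_union_le _ _

lemma freq_false : freq (fun _ : Ω => False) = 0 := by
  simp [freq]

lemma freq_true [Nonempty Ω] : freq (fun _ : Ω => True) = 1 := by
  simp [freq]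

lemma freq_exists_le (s : Finset ι) (p : ι → Ω → Prop) :
    freq (fun c => ∃ i ∈ s, p i c) ≤ ∑ i ∈ s, freq (p i) := by
  classical
  induction s using Finset.induction_on with
  | empty => simp [freq]
  | insert a s ha ih =>
    rw [sum_insert ha]
    refine le_trans (freq_mono fun c => ?_) ((freq_or_le (p a) _).trans (by gcongr))
    simp

lemma exists_not_of_freq_lt_one [Nonempty Ω] {p : Ω → Prop} (h : freq p < 1) :
    ∃ c, ¬ p c := by
  by_contra! hp
  have : freq p = 1 := by rw [← freq_true (Ω := Ω)]; congr; ext c; simp [hp c]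
  linarith

lemma sum_card_filter_eq (s : Finset ι) (p : ι → Ω → Prop)
    [∀ c, DecidablePred fun i => p i c] :
    ∑ c, (#{i ∈ s | p i c} : ℝ) = (∑ i ∈ s, freq (p i)) * Fintype.card Ω := by
  rcases isEmpty_or_nonempty Ω with h | h
  · simp
  have hT : (Fintype.card Ω : ℝ) ≠ 0 := by simp
  rw [sum_mul]
  simp only [freq, div_mul_cancel₀ _ hT, card_filter]
  push_cast
  exact sum_comm

/-- Markov's inequality for the number of indices whose event occurs. -/
lemma freq_le_card_filter_mul_le (s : Finset ι) (p : ι → Ω → Prop)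
    [∀ c, DecidablePred fun i => p i c] (a : ℝ) :
    freq (fun c => a ≤ #{i ∈ s | p i c}) * a ≤ ∑ i ∈ s, freq (p i) := by
  rcases isEmpty_or_nonempty Ω with h | h
  · simp [freq]
  have hT : (0 : ℝ) < Fintype.card Ω := by simp [Fintype.card_pos]
  rw [freq, div_mul_eq_mul_div, div_le_iff₀ hT, ← sum_card_filter_eq, ← nsmul_eq_mul,
    ← sum_const]
  refine (sum_le_sum fun c hc => (mem_filter.1 hc).2).trans ?_
  exact sum_le_sum_of_subset_of_nonneg (subset_univ _) fun _ _ _ => by positivity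

variable [Fintype V] [DecidableEq V] [Fintype Γ] [Nonempty Γ]

/-- The colour of `v` is independent of any event not depending on that colour. -/
lemma freq_colour_and (v : V) (j : Γ) (p : (V → Γ) → Prop)
    (hp : ∀ c x, p (Function.update c v x) ↔ p c) :
    freq (fun c : V → Γ => c v = j ∧ p c) = freq p / Fintype.card Γ := by
  classical
  have h : #{c : V → Γ | p c} = Fintype.card Γ * #{c : V → Γ | c v = j ∧ p c} := by
    rw [← card_univ, ← card_product]
    refine card_nbij' (fun c => (c v, Function.update c v j))
      (fun y => Function.update y.2 v y.1) ?_ ?_ ?_ ?_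
    · intro c hc
      simpa [hp] using hc
    · rintro ⟨x, c⟩ hc
      simp only [coe_product, coe_univ, Set.mem_prod, Set.mem_univ, true_and, coe_filter,
        mem_univ, Set.mem_ofPred_eq] at hc ⊢
      exact (hp _ _).2 hc.2
    · intro c _
      simp
    · rintro ⟨x, c⟩ hc
      simp only [coe_product, coe_univ, Set.mem_prod, Set.mem_univ, true_and, coe_filter,
        mem_univ, Set.mem_ofPred_eq] at hc
      simp [← hc.1]
  have hg : (Fintype.card Γ : ℝ) ≠ 0 := by simp
  rw [freq, freq, h]
  push_cast
  field_simp
  congr!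

lemma freq_colour (v : V) (j : Γ) :
    freq (fun c : V → Γ => c v = j) = 1 / Fintype.card Γ := by
  have := freq_colour_and v j (fun _ => True) (by simp)
  simpa [freq_true] using this

lemma sum_indicator_eq (p : (V → Γ) → Prop) [DecidablePred p] :
    ∑ c, (if p c then (1 : ℝ) else 0) = freq p * Fintype.card (V → Γ) := by
  have hT : (Fintype.card (V → Γ) : ℝ) ≠ 0 := by
    exact_mod_cast Fintype.card_ne_zero
  rw [freq, div_mul_cancel₀ _ hT, sum_boole]
  congr!

open Classical in
/-- Chebyshev's inequality for the size of a colour class of a random colouring. -/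
lemma freq_small_colour_class (F : Finset V) (j : Γ) :
    freq (fun c : V → Γ => 2 * (Fintype.card Γ : ℝ) * #{v ∈ F | c v = j} ≤ #F) * #F
      ≤ 4 * Fintype.card Γ := by
  set g : ℝ := (Fintype.card Γ : ℝ) with hg_def
  set T : ℝ := (Fintype.card (V → Γ) : ℝ) with hT_def
  have hg : 0 < g := by simp [hg_def, Fintype.card_pos]
  have hT : 0 < T := by
    have : 0 < Fintype.card (V → Γ) := Fintype.card_pos
    rw [hT_def]
    exact_mod_cast this
  let a : V → (V → Γ) → ℝ := fun v c => g * (if c v = j then 1 else 0) - 1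
  have hone : ∀ v, ∑ c : V → Γ, (if c v = j then (1 : ℝ) else 0) = T / g := by
    intro v
    rw [sum_indicator_eq, freq_colour, ← hT_def, ← hg_def]
    ring
  have hdiag : ∀ v, ∑ c, a v c * a v c ≤ g * T := by
    intro v
    have : ∀ c, a v c * a v c = (g ^ 2 - 2 * g) * (if c v = j then 1 else 0) + 1 := by
      intro c
      simp only [a]
      split_ifs <;> ring
    simp only [this, sum_add_distrib, ← mul_sum, hone]
    simp only [sum_const, card_univ, nsmul_eq_mul, mul_one]
    rw [← hT_def]
    have : (g ^ 2 - 2 * g) * (T / g) + T = g * T - T := by field_simp; ring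
    linarith
  have hoff : ∀ v w, v ≠ w → ∑ c, a v c * a w c = 0 := by
    intro v w hvw
    have : ∀ c, a v c * a w c = g ^ 2 * (if c v = j ∧ c w = j then 1 else 0)
        - g * (if c v = j then 1 else 0) - g * (if c w = j then 1 else 0) + 1 := by
      intro c
      simp only [a]
      by_cases h1 : c v = j <;> by_cases h2 : c w = j <;> simp [h1, h2] <;> ring
    simp only [this, sum_add_distrib, sum_sub_distrib, ← mul_sum, hone]
    rw [sum_indicator_eq, freq_colour_and v j (fun c => c w = j)
      (fun c x => by simp [Function.update_of_ne hvw.symm]), freq_colour]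
    simp only [sum_const, card_univ, nsmul_eq_mul, mul_one]
    rw [← hT_def, ← hg_def]
    field_simp
    ring
  have hvar : ∑ c, (∑ v ∈ F, a v c) ^ 2 ≤ #F * (g * T) := by
    calc ∑ c, (∑ v ∈ F, a v c) ^ 2 = ∑ v ∈ F, ∑ w ∈ F, ∑ c, a v c * a w c := by
          simp only [sq, sum_mul_sum]
          rw [sum_comm]
          exact sum_congr rfl fun v _ => sum_comm
      _ = ∑ v ∈ F, ∑ c, a v c * a v c := by
          refine sum_congr rfl fun v hv => ?_
          exact sum_eq_single v (fun w _ hw => hoff v w hw.symm) (fun h => absurd hv h)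
      _ ≤ ∑ v ∈ F, g * T := sum_le_sum fun v _ => hdiag v
      _ = #F * (g * T) := by simp
  have hsum : ∀ c : V → Γ, ∑ v ∈ F, a v c = g * #{v ∈ F | c v = j} - #F := by
    intro c
    simp only [a, sum_sub_distrib, ← mul_sum]
    simp
  set P : Finset (V → Γ) := {c | 2 * g * #{v ∈ F | c v = j} ≤ #F} with hP
  have hlow : #P * ((#F : ℝ) ^ 2 / 4) ≤ ∑ c, (∑ v ∈ F, a v c) ^ 2 := by
    rw [← nsmul_eq_mul, ← sum_const]
    refine (sum_le_sum fun c hc => ?_).trans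
      (sum_le_sum_of_subset_of_nonneg (subset_univ P) fun _ _ _ => by positivity)
    have h1 := (mem_filter.1 hc).2
    rw [hsum]
    have h0 : (0 : ℝ) ≤ #F := by positivity
    nlinarith
  have key := hlow.trans hvar
  change (#P : ℝ) / T * #F ≤ 4 * g
  rcases (Nat.cast_nonneg (α := ℝ) #F).eq_or_lt with h0 | h0
  · rw [← h0]; simp; positivity
  · rw [div_mul_eq_mul_div, div_le_iff₀ hT]
    have : (#F : ℝ) * (#P * #F) ≤ #F * (4 * g * T) := by nlinarith
    exact le_of_mul_le_mul_left this h0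

open Classical in
/-- If every `v ∈ F` is rarely bad, and badness of `v` does not depend on the colour of `v`,
then usually many vertices of `F` have colour `j` and are not bad. -/
lemma freq_few_not_bad (F : Finset V) (j : Γ) (bad : V → (V → Γ) → Prop) {m q r : ℝ}
    (hm : 0 < m) (hmF : m ≤ #F) (hr : 4 * Fintype.card Γ * r ≤ m)
    (hinv : ∀ v ∈ F, ∀ c x, bad v (Function.update c v x) ↔ bad v c)
    (hq : ∀ v ∈ F, freq (bad v) ≤ q) :
    freq (fun c : V → Γ => (#{v ∈ F | c v = j ∧ ¬ bad v c} : ℝ) < r)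
      ≤ 4 * Fintype.card Γ / m + 4 * q := by
  set g : ℝ := (Fintype.card Γ : ℝ) with hg_def
  have hg : 0 < g := by simp [hg_def, Fintype.card_pos]
  have hF : (0 : ℝ) < #F := hm.trans_le hmF
  have hsplit : ∀ c : V → Γ, (#{v ∈ F | c v = j ∧ ¬ bad v c} : ℝ) < r →
      2 * g * #{v ∈ F | c v = j} ≤ #F ∨ #F / (4 * g) ≤ #{v ∈ F | c v = j ∧ bad v c} := by
    intro c hc
    by_contra! h
    obtain ⟨h1, h2⟩ := h
    have hcard : (#{v ∈ F | c v = j} : ℝ)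
        = #{v ∈ F | c v = j ∧ bad v c} + #{v ∈ F | c v = j ∧ ¬ bad v c} := by
      rw [← filter_filter, ← filter_filter]
      exact_mod_cast (card_filter_add_card_filter_not _).symm
    rw [lt_div_iff₀ (by positivity)] at h2
    nlinarith
  refine (freq_mono hsplit).trans ((freq_or_le _ _).trans (add_le_add ?_ ?_))
  · rw [le_div_iff₀ hm]
    refine le_trans ?_ (freq_small_colour_class F j)
    gcongr
    unfold freq
    positivity
  · have h := freq_le_card_filter_mul_le F (fun v c => c v = j ∧ bad v c) (#F / (4 * g))
    have h2 : ∑ v ∈ F, freq (fun c : V → Γ => c v = j ∧ bad v c) ≤ #F * (q / g) := by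
      rw [← nsmul_eq_mul]
      refine sum_le_card_nsmul _ _ _ fun v hv => ?_
      rw [freq_colour_and v j _ (hinv v hv)]
      gcongr
      exact hq v hv
    have h3 := h.trans h2
    have : (#F : ℝ) * (q / g) = (4 * q) * (#F / (4 * g)) := by field_simp
    rw [this] at h3
    have hpos : 0 < #F / (4 * g) := by positivity
    exact le_of_mul_le_mul_right h3 hpos

end Frequency

section Settled

variable {V Γ : Type*} [DecidableEq V]

open Classical in
/-- More than `k` vertices of `s` have colour `j` and satisfy `p`. -/
def ManyColoured (k : ℕ) (j : Γ) (c : V → Γ) (s : Finset V) (p : V → Prop) : Prop :=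
  k < #{x ∈ s | c x = j ∧ p x}

lemma manyColoured_update_iff {k : ℕ} {j : Γ} {c : V → Γ} {s : Finset V} {p q : V → Prop}
    {v : V} (x : Γ) (h : ∀ w ∈ s, w ≠ v ∧ (p w ↔ q w) ∨ (¬ p w ∧ ¬ q w)) :
    ManyColoured k j (Function.update c v x) s p ↔ ManyColoured k j c s q := by
  classical
  unfold ManyColoured
  have : ({w ∈ s | Function.update c v x w = j ∧ p w} : Finset V)
      = {w ∈ s | c w = j ∧ q w} := by
    refine filter_congr fun w hw => ?_
    rcases h w hw with ⟨h1, h2⟩ | ⟨h1, h2⟩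
    · rw [Function.update_of_ne h1, h2]
    · simp [h1, h2]
  rw [this]

variable [Fintype V]

lemma freq_not_manyColoured [Fintype Γ] [Nonempty Γ] {s : Finset V} {m q : ℝ} {k : ℕ} (j : Γ)
    {P : V → Prop} (hs : ManyIn s m P) (hm : 4 * Fintype.card Γ * ((k : ℝ) + 1) ≤ m)
    (good : (V → Γ) → V → Prop)
    (hinv : ∀ v ∈ s, P v → ∀ c x, good (Function.update c v x) v ↔ good c v)
    (hq : ∀ v ∈ s, P v → freq (fun c => ¬ good c v) ≤ q) :
    freq (fun c : V → Γ => ¬ ManyColoured k j c s (good c))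
      ≤ 4 * Fintype.card Γ / m + 4 * q := by
  classical
  obtain ⟨F, hFs, hmF, hFP⟩ := hs
  have hm0 : 0 < m := by
    have : (0 : ℝ) < Fintype.card Γ := by exact_mod_cast Fintype.card_pos
    exact lt_of_lt_of_le (by positivity) hm
  refine le_trans (freq_mono fun c hc => ?_) (freq_few_not_bad F j (fun v c => ¬ good c v)
    hm0 hmF hm (fun v hv c x => not_congr (hinv v (hFs hv) (hFP v hv) c x))
    (fun v hv => hq v (hFs hv) (hFP v hv)))
  unfold ManyColoured at hc
  simp only [not_not]
  have h1 : #{v ∈ F | c v = j ∧ good c v} ≤ #{x ∈ s | c x = j ∧ good c x} :=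
    card_le_card (filter_subset_filter _ hFs)
  have h2 : #{v ∈ F | c v = j ∧ good c v} < k + 1 := by
    have := h1.trans (not_lt.1 (by convert hc))
    omega
  have h3 : (#{v ∈ F | c v = j ∧ good c v} : ℝ) < (k : ℝ) + 1 := by exact_mod_cast h2
  convert h3

variable (E : V → V → Prop) [DecidableRel E] (k : ℕ) (j : Γ) (e₁ e₂ e₃ e₄ : V → Prop)

/-- The vertex satisfies `e₁`, or satisfies `e₂` and has more than `k` in-neighbours of
colour `j` satisfying `e₁`. -/
def LinkedOut (c : V → Γ) (v : V) : Prop :=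
  e₁ v ∨ e₂ v ∧ ManyColoured k j c (inN E v) e₁

/-- Whichever of `e₁`, …, `e₄` is relied on, the in- and out-neighbours that it promises occur
in colour `j` more than `k` times. -/
def Settled (c : V → Γ) (v : V) : Prop :=
  LinkedOut E k j e₁ e₂ c v ∨
    e₃ v ∧ ManyColoured k j c (outN E v) (LinkedOut E k j e₁ e₂ c) ∨
    e₄ v ∧ ManyColoured k j c (inN E v) e₁ ∧
      ManyColoured k j c (outN E v) (LinkedOut E k j e₁ e₂ c)

variable {E k j e₁ e₂ e₃ e₄}

lemma manyColoured_inN_update_iff (hE : ∀ v, ¬ E v v) (c : V → Γ) (v : V) (x : Γ) :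
    ManyColoured k j (Function.update c v x) (inN E v) e₁
      ↔ ManyColoured k j c (inN E v) e₁ := by
  refine manyColoured_update_iff x fun w hw => Or.inl ⟨?_, Iff.rfl⟩
  rintro rfl
  exact hE w (by simpa [inN] using hw)

lemma linkedOut_update_self_iff (hE : ∀ v, ¬ E v v) (c : V → Γ) (v : V) (x : Γ) :
    LinkedOut E k j e₁ e₂ (Function.update c v x) v ↔ LinkedOut E k j e₁ e₂ c v := by
  unfold LinkedOut
  rw [manyColoured_inN_update_iff hE]

lemma linkedOut_update_iff {v : V} (hv : ¬ e₁ v) (c : V → Γ) (x : Γ) (w : V) :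
    LinkedOut E k j e₁ e₂ (Function.update c v x) w ↔ LinkedOut E k j e₁ e₂ c w := by
  classical
  unfold LinkedOut
  rw [manyColoured_update_iff (q := e₁) x]
  intro u _
  by_cases huv : u = v
  · subst huv
    exact Or.inr ⟨hv, hv⟩
  · exact Or.inl ⟨huv, Iff.rfl⟩

lemma settled_update_iff (hE : ∀ v, ¬ E v v) (c : V → Γ) (v : V) (x : Γ) :
    Settled E k j e₁ e₂ e₃ e₄ (Function.update c v x) v
      ↔ Settled E k j e₁ e₂ e₃ e₄ c v := by
  by_cases hv : e₁ v
  · simp [Settled, LinkedOut, hv]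
  · have : ManyColoured k j (Function.update c v x) (outN E v)
        (LinkedOut E k j e₁ e₂ (Function.update c v x))
        ↔ ManyColoured k j c (outN E v) (LinkedOut E k j e₁ e₂ c) := by
      refine manyColoured_update_iff x fun w hw => Or.inl ⟨?_, linkedOut_update_iff hv c x w⟩
      rintro rfl
      exact hE w (by simpa [outN] using hw)
    unfold Settled
    rw [linkedOut_update_self_iff hE, manyColoured_inN_update_iff hE, this]

variable [Fintype Γ] [Nonempty Γ]

/-- A set with many vertices satisfying one of `e₁`, …, `e₄` usually contains more than `k`
settled vertices of colour `j`. -/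
lemma freq_not_manyColoured_settled {m : ℝ} (hE : ∀ v, ¬ E v v)
    (hm : 4 * Fintype.card Γ * ((k : ℝ) + 1) ≤ m)
    (h₂ : ∀ v, e₂ v → ManyIn (inN E v) m e₁)
    (h₃ : ∀ v, e₃ v → ManyIn (outN E v) m (fun w => e₁ w ∨ e₂ w))
    (h₄ : ∀ v, e₄ v → ManyIn (inN E v) m e₁ ∧ ManyIn (outN E v) m (fun w => e₁ w ∨ e₂ w))
    {s : Finset V} (hs : ManyIn s m (fun v => e₁ v ∨ e₂ v ∨ e₃ v ∨ e₄ v)) :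
    freq (fun c : V → Γ => ¬ ManyColoured k j c s (Settled E k j e₁ e₂ e₃ e₄ c))
      ≤ 100 * Fintype.card Γ / m := by
  set ε : ℝ := 4 * Fintype.card Γ / m with hε
  have hg : (0 : ℝ) < Fintype.card Γ := by exact_mod_cast Fintype.card_pos
  have hm0 : 0 < m := lt_of_lt_of_le (by positivity) hm
  have hε0 : 0 ≤ ε := by positivity
  have hin : ∀ v, ManyIn (inN E v) m e₁ →
      freq (fun c : V → Γ => ¬ ManyColoured k j c (inN E v) e₁) ≤ ε := by
    intro v hv
    have := freq_not_manyColoured j hv hm (q := 0) (fun _ w => e₁ w) (fun _ _ _ _ _ => Iff.rfl)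
      (fun w _ hw => (by simp [hw, freq_false]))
    simpa using this
  have hlink : ∀ v, e₁ v ∨ e₂ v →
      freq (fun c : V → Γ => ¬ LinkedOut E k j e₁ e₂ c v) ≤ ε := by
    rintro v (hv | hv)
    · simpa [LinkedOut, hv, freq_false] using hε0
    · refine (freq_mono fun c hc => ?_).trans (hin v (h₂ v hv))
      exact fun h => hc (Or.inr ⟨hv, h⟩)
  have hout : ∀ v, ManyIn (outN E v) m (fun w => e₁ w ∨ e₂ w) →
      freq (fun c : V → Γ =>
        ¬ ManyColoured k j c (outN E v) (LinkedOut E k j e₁ e₂ c)) ≤ 5 * ε := by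
    intro v hv
    have := freq_not_manyColoured j hv hm (LinkedOut E k j e₁ e₂)
      (fun w _ _ c x => linkedOut_update_self_iff hE c w x) (fun w _ hw => hlink w hw)
    linarith
  have hset : ∀ v, e₁ v ∨ e₂ v ∨ e₃ v ∨ e₄ v →
      freq (fun c : V → Γ => ¬ Settled E k j e₁ e₂ e₃ e₄ c v) ≤ 6 * ε := by
    intro v hv
    rw [← or_assoc] at hv
    rcases hv with hv | hv | hv
    · refine (freq_mono fun c hc => ?_).trans ((hlink v hv).trans (by linarith))
      exact fun h => hc (Or.inl h)
    · refine (freq_mono fun c hc => ?_).trans ((hout v (h₃ v hv)).trans (by linarith))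
      exact fun h => hc (Or.inr (Or.inl ⟨hv, h⟩))
    · refine (freq_mono fun c hc => ?_).trans ((freq_or_le _ _).trans
        ((add_le_add (hin v (h₄ v hv).1) (hout v (h₄ v hv).2)).trans (by linarith)))
      by_contra! h
      exact hc (Or.inr (Or.inr ⟨hv, h.1, h.2⟩))
  have := freq_not_manyColoured j hs hm (Settled E k j e₁ e₂ e₃ e₄)
    (fun w _ _ c x => settled_update_iff hE c w x) (fun w _ hw => hset w hw)
  calc _ ≤ ε + 4 * (6 * ε) := this
    _ = _ := by rw [hε]; ring

end Settled

section Connectivity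

variable {V I : Type*}

lemma card_le_card_of_meets (G : GadgetSystem V I) (hU : CondG1 G) {M : Finset I}
    {Y : Finset V} (h : ∀ α ∈ M, ∃ x ∈ G.U α, x ∈ Y) : #M ≤ #Y := by
  obtain rfl | ⟨α₀, hα₀⟩ := M.eq_empty_or_nonempty
  · simp
  have : Nonempty V := ⟨(h α₀ hα₀).choose⟩
  choose! f hf hfY using h
  refine card_le_card_of_injOn f hfY fun α hα β hβ hab => ?_
  by_contra hne
  exact disjoint_left.1 (hU α β hne) (hf α hα) (hab ▸ hf β hβ)

variable [Fintype V] [DecidableEq V] [DecidableEq I]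

/-- The gadgets of a group of `10 * k` indices, together with a suitable set `A` of further
vertices, induce a strongly `k`-connected tournament. -/
lemma stronglyKConnectedOn_biUnion_union (E : V → V → Prop) [DecidableRel E]
    (G : GadgetSystem V I) {k : ℕ} (hk : 1 ≤ k) (h1 : CondG1 G) (h3 : CondG3 E G)
    (h4 : CondG4 E G) {B : Finset I} (hB : #B = 10 * k) {A₁ A₂ A : Finset V}
    (h₁₂ : A₁ ⊆ A₂) (h₂A : A₂ ⊆ A)
    (hin₁ : ∀ x ∈ A₁, #(MissIn E G B x) ≤ k) (hout₂ : ∀ x ∈ A₂, #(MissOut E G B x) ≤ k)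
    (hin : ∀ x ∈ A, #(MissIn E G B x) ≤ k ∨ k < #(inN E x ∩ A₁))
    (hout : ∀ x ∈ A, #(MissOut E G B x) ≤ k ∨ k < #(outN E x ∩ A₂))
    (hS : ∀ α ∈ B, ∀ u ∈ G.S α,
      k < #((outN E u \ G.X α) ∩ A) ∧ k < #((inN E u \ G.X α) ∩ A)) :
    StronglyKConnectedOn E k (B.biUnion G.U ∪ A) := by
  classical
  set D := B.biUnion G.U ∪ A with hD
  have hUD : ∀ α ∈ B, G.U α ⊆ D := fun α hα =>
    (subset_biUnion_of_mem G.U hα).trans subset_union_left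
  have hAD : A ⊆ D := subset_union_right
  refine ⟨?_, fun Z hZ => ?_⟩
  · have : #B ≤ #D := card_le_card_of_meets G h1 fun α hα =>
      ⟨G.sp α, G.S_subset α (G.sp_mem α), hUD α hα (G.S_subset α (G.sp_mem α))⟩
    omega
  let R := ReachWithin E ((D \ Z : Finset V) : Set V)
  let L := {α ∈ B | Disjoint (G.U α) Z}
  have hLB : L ⊆ B := filter_subset _ _
  have hLcard : 9 * k ≤ #L := by
    have : #(B \ L) ≤ #Z := card_le_card_of_meets G h1 fun α hα => by
      have : α ∈ B ∧ ¬ Disjoint (G.U α) Z := by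
        simp only [L, mem_sdiff, mem_filter, not_and] at hα
        exact ⟨hα.1, hα.2 hα.1⟩
      exact not_disjoint_iff.1 this.2
    have := card_sdiff_add_card_eq_card hLB
    omega
  have hUL : ∀ α ∈ L, G.U α ⊆ D \ Z := fun α hα x hx =>
    mem_sdiff.2 ⟨hUD α (hLB hα) hx, disjoint_left.1 (mem_filter.1 hα).2 hx⟩
  have hedge : ∀ {x y}, x ∈ D \ Z → y ∈ D \ Z → E x y → R x y := fun hx hy h =>
    Relation.ReflTransGen.single ⟨mem_coe.2 hx, mem_coe.2 hy, h⟩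
  have htrans : ∀ {x y z}, R x y → R y z → R x z := fun h h' => Relation.ReflTransGen.trans h h'
  let Out : V → Prop := fun x => 8 * k ≤ #{α ∈ L | ∃ y ∈ G.Sm α, R x y}
  let In : V → Prop := fun x => 8 * k ≤ #{α ∈ L | ∃ y ∈ G.Sp α, R y x}
  have hjoin : ∀ x y, Out x → In y → R x y := by
    intro x y hx hy
    have hne : ({α ∈ L | ∃ y ∈ G.Sm α, R x y} ∩ {α ∈ L | ∃ z ∈ G.Sp α, R z y}).Nonempty := by
      rw [← card_pos]
      have h5 := card_union_add_card_inter {α ∈ L | ∃ y ∈ G.Sm α, R x y}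
        {α ∈ L | ∃ z ∈ G.Sp α, R z y}
      have h6 : #({α ∈ L | ∃ y ∈ G.Sm α, R x y} ∪ {α ∈ L | ∃ z ∈ G.Sp α, R z y}) ≤ #B :=
        card_le_card ((union_subset (filter_subset _ _) (filter_subset _ _)).trans hLB)
      simp only [Out, In] at hx hy
      omega
    obtain ⟨α, hα⟩ := hne
    simp only [mem_inter, mem_filter] at hα
    obtain ⟨⟨hαL, a, ha, hxa⟩, -, b, hb, hby⟩ := hα
    refine htrans hxa (htrans ?_ hby)
    exact (h3 α a ha b hb).lift id fun u v h => ⟨hUL α hαL h.1, hUL α hαL h.2.1, h.2.2⟩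
  have hOutStep : ∀ {x y}, R x y → Out y → Out x := fun h hy => hy.trans <| card_le_card <|
    monotone_filter_right _ fun _ _ ⟨z, hz, hyz⟩ => ⟨z, hz, htrans h hyz⟩
  have hInStep : ∀ {x y}, R x y → In x → In y := fun h hx => hx.trans <| card_le_card <|
    monotone_filter_right _ fun _ _ ⟨z, hz, hyz⟩ => ⟨z, hz, htrans hyz h⟩
  have hOutMiss : ∀ x ∈ D \ Z, #(MissOut E G B x) ≤ k → Out x := by
    intro x hx hmiss
    have hsub : L \ MissOut E G B x ⊆ {α ∈ L | ∃ y ∈ G.Sm α, R x y} := by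
      intro α hα
      simp only [MissOut, mem_sdiff, mem_filter, not_and, not_forall, not_not] at hα
      obtain ⟨hαL, hα⟩ := hα
      obtain ⟨y, hy, hxy⟩ := hα (hLB hαL)
      exact mem_filter.2 ⟨hαL, y, hy,
        hedge hx (hUL α hαL (G.S_subset α (G.Sm_subset α hy))) hxy⟩
    have h5 := card_le_card hsub
    have h6 := le_card_sdiff (MissOut E G B x) L
    simp only [Out]
    omega
  have hInMiss : ∀ x ∈ D \ Z, #(MissIn E G B x) ≤ k → In x := by
    intro x hx hmiss
    have hsub : L \ MissIn E G B x ⊆ {α ∈ L | ∃ y ∈ G.Sp α, R y x} := by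
      intro α hα
      simp only [MissIn, mem_sdiff, mem_filter, not_and, not_forall, not_not] at hα
      obtain ⟨hαL, hα⟩ := hα
      obtain ⟨y, hy, hxy⟩ := hα (hLB hαL)
      exact mem_filter.2 ⟨hαL, y, hy,
        hedge (hUL α hαL (G.S_subset α (G.Sp_subset α hy))) hx hxy⟩
    have h5 := card_le_card hsub
    have h6 := le_card_sdiff (MissIn E G B x) L
    simp only [In]
    omega
  have havoid : ∀ {Y : Finset V}, k < #Y → ∃ y ∈ Y, y ∉ Z := fun hY =>
    exists_mem_notMem_of_card_lt_card (hZ.trans_lt hY)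
  have hOutA : ∀ x ∈ A, x ∉ Z → Out x := by
    intro x hx hxZ
    have hxD := mem_sdiff.2 ⟨hAD hx, hxZ⟩
    rcases hout x hx with h | h
    · exact hOutMiss x hxD h
    · obtain ⟨y, hy, hyZ⟩ := havoid h
      simp only [outN, mem_inter, mem_filter, mem_univ, true_and] at hy
      have hyD := mem_sdiff.2 ⟨hAD (h₂A hy.2), hyZ⟩
      exact hOutStep (hedge hxD hyD hy.1) (hOutMiss y hyD (hout₂ y hy.2))
  have hInA : ∀ x ∈ A, x ∉ Z → In x := by
    intro x hx hxZ
    have hxD := mem_sdiff.2 ⟨hAD hx, hxZ⟩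
    rcases hin x hx with h | h
    · exact hInMiss x hxD h
    · obtain ⟨y, hy, hyZ⟩ := havoid h
      simp only [inN, mem_inter, mem_filter, mem_univ, true_and] at hy
      have hyD := mem_sdiff.2 ⟨hAD (h₂A (h₁₂ hy.2)), hyZ⟩
      exact hInStep (hedge hyD hxD hy.1) (hInMiss y hyD (hin₁ y hy.2))
  have hOutU : ∀ α ∈ B, ∀ u ∈ G.U α, u ∉ Z → Out u := by
    intro α hα u hu huZ
    have huD := mem_sdiff.2 ⟨hUD α hα hu, huZ⟩
    by_cases huS : u ∈ G.S α
    · obtain ⟨y, hy, hyZ⟩ := havoid (hS α hα u huS).1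
      simp only [outN, mem_inter, mem_sdiff, mem_filter, mem_univ, true_and] at hy
      exact hOutStep (hedge huD (mem_sdiff.2 ⟨hAD hy.2, hyZ⟩) hy.1.1) (hOutA y hy.2 hyZ)
    · obtain ⟨y, hy, hyZ⟩ := havoid (hS α hα _ (G.sm_mem α)).1
      simp only [outN, mem_inter, mem_sdiff, mem_filter, mem_univ, true_and] at hy
      exact hOutStep (hedge huD (mem_sdiff.2 ⟨hAD hy.2, hyZ⟩)
        ((h4 α y hy.1.2).2 hy.1.1 u (mem_sdiff.2 ⟨hu, huS⟩))) (hOutA y hy.2 hyZ)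
  have hInU : ∀ α ∈ B, ∀ u ∈ G.U α, u ∉ Z → In u := by
    intro α hα u hu huZ
    have huD := mem_sdiff.2 ⟨hUD α hα hu, huZ⟩
    by_cases huS : u ∈ G.S α
    · obtain ⟨y, hy, hyZ⟩ := havoid (hS α hα u huS).2
      simp only [inN, mem_inter, mem_sdiff, mem_filter, mem_univ, true_and] at hy
      exact hInStep (hedge (mem_sdiff.2 ⟨hAD hy.2, hyZ⟩) huD hy.1.1) (hInA y hy.2 hyZ)
    · obtain ⟨y, hy, hyZ⟩ := havoid (hS α hα _ (G.sp_mem α)).2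
      simp only [inN, mem_inter, mem_sdiff, mem_filter, mem_univ, true_and] at hy
      exact hInStep (hedge (mem_sdiff.2 ⟨hAD hy.2, hyZ⟩) huD
        ((h4 α y hy.1.2).1 hy.1.1 u (mem_sdiff.2 ⟨hu, huS⟩))) (hInA y hy.2 hyZ)
  intro u hu v hv
  simp only [coe_sdiff, Set.mem_sdiff, mem_coe, hD, mem_union, mem_biUnion] at hu hv
  apply hjoin
  · rcases hu with ⟨⟨α, hα, hu⟩ | hu, huZ⟩
    · exact hOutU α hα u hu huZ
    · exact hOutA u hu huZ
  · rcases hv with ⟨⟨α, hα, hv⟩ | hv, hvZ⟩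
    · exact hInU α hα v hv hvZ
    · exact hInA v hv hvZ

end Connectivity

section Groups

variable {V I Γ : Type*} [Fintype V] [DecidableEq V] [Fintype I]

lemma ManyIn.mono {α : Type*} {s s' : Finset α} {m : ℝ} {P Q : α → Prop} (h : ManyIn s m P)
    (hPQ : ∀ x ∈ s, P x → x ∈ s' ∧ Q x) : ManyIn s' m Q := by
  obtain ⟨F, hF, hm, hP⟩ := h
  exact ⟨F, fun x hx => (hPQ x (hF hx) (hP x hx)).1, hm,
    fun x hx => (hPQ x (hF hx) (hP x hx)).2⟩

variable {E : V → V → Prop} [DecidableRel E] {G : GadgetSystem V I} {k t : ℕ} {m : ℝ}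
  {𝒜 : Finset I} {W W' : Finset V} {u : V}

lemma Nice1.mono (hW : W ⊆ W') (h : Nice1 E G k t 𝒜 W u) : Nice1 E G k t 𝒜 W' u :=
  ⟨inter_subset_inter_left hW h.1, h.2⟩

lemma Nice2.mono (hW : W ⊆ W') (h : Nice2 E G k t m 𝒜 W u) : Nice2 E G k t m 𝒜 W' u :=
  ⟨inter_subset_inter_left hW h.1, h.2.1, h.2.2.mono fun _ hx h => ⟨hx, h.mono hW⟩⟩

lemma Nice3.mono (hW : W ⊆ W') (h : Nice3 E G k t m 𝒜 W u) : Nice3 E G k t m 𝒜 W' u :=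
  ⟨inter_subset_inter_left hW h.1, h.2.1, h.2.2.mono fun _ hx h =>
    ⟨hx, h.imp (Nice1.mono hW) (Nice2.mono hW)⟩⟩

lemma Nice4.mono (hW : W ⊆ W') (h : Nice4 E G k t m 𝒜 W u) : Nice4 E G k t m 𝒜 W' u :=
  ⟨inter_subset_inter_left hW h.1, h.2.1.mono fun _ hx h => ⟨hx, h.mono hW⟩,
    h.2.2.mono fun _ hx h => ⟨hx, h.imp (Nice1.mono hW) (Nice2.mono hW)⟩⟩

lemma NiceFor.mono (hW : W ⊆ W') (h : NiceFor E G k t m 𝒜 W u) :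
    NiceFor E G k t m 𝒜 W' u :=
  h.imp (Nice1.mono hW) (Or.imp (Nice2.mono hW) (Or.imp (Nice3.mono hW) (Nice4.mono hW)))

lemma NiceFor.mem (h : NiceFor E G k t m 𝒜 W u) : u ∈ W := by
  rcases h with h | h | h | h <;> exact (mem_inter.1 h.1).2

lemma NiceFor.nice1_of_mem_Vgood (h : NiceFor E G k t m 𝒜 W u) (hu : u ∈ Vgood E G k t) :
    Nice1 E G k t 𝒜 W u := by
  simp only [Vgood, VgoodP, VgoodM, mem_inter, mem_sdiff] at hu
  rcases h with h | h | h | h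
  · exact h
  all_goals
    have h' := h.1
    simp only [Vbad, VgoodP, VgoodM, mem_inter, mem_sdiff] at h'
    tauto

variable (E G k t m 𝒜 W)

/-- `v` is settled with respect to eligibility for `𝒜` in `W`. -/
def SettledFor (j : Γ) (c : V → Γ) (v : V) : Prop :=
  Settled E k j (Nice1 E G k t 𝒜 W) (Nice2 E G k t m 𝒜 W) (Nice3 E G k t m 𝒜 W)
    (Nice4 E G k t m 𝒜 W) c v

/-- Each vertex of each `S(α)`, `α ∈ 𝒜`, has more than `k` settled out-neighbours and more than
`k` settled in-neighbours of colour `j` outside `X(α)`. -/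
def WellColoured (j : Γ) (c : V → Γ) : Prop :=
  ∀ α ∈ 𝒜, ∀ u ∈ G.S α,
    ManyColoured k j c (outN E u \ G.X α) (SettledFor E G k t m 𝒜 W j c) ∧
      ManyColoured k j c (inN E u \ G.X α) (SettledFor E G k t m 𝒜 W j c)

variable {E G k t m 𝒜 W}

lemma SettledFor.mem {j : Γ} {c : V → Γ} (h : SettledFor E G k t m 𝒜 W j c u) : u ∈ W := by
  rcases h with (h | h) | h | h
  · exact (mem_inter.1 h.1).2
  all_goals exact (mem_inter.1 h.1.1).2

lemma freq_not_wellColoured_le [Fintype Γ] [Nonempty Γ] (j : Γ) {r : ℕ} (hE : ∀ v, ¬ E v v)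
    (hm : 4 * Fintype.card Γ * ((k : ℝ) + 1) ≤ m) (hr : ∀ α ∈ 𝒜, #(G.S α) ≤ r)
    (h : ∀ α ∈ 𝒜, ∀ u ∈ G.S α,
      ManyIn (outN E u) m (NiceFor E G k t m 𝒜 (W \ G.X α)) ∧
        ManyIn (inN E u) m (NiceFor E G k t m 𝒜 (W \ G.X α))) :
    freq (fun c : V → Γ => ¬ WellColoured E G k t m 𝒜 W j c)
      ≤ #𝒜 * (r * (200 * Fintype.card Γ / m)) := by
  have hg : (0 : ℝ) < Fintype.card Γ := by exact_mod_cast Fintype.card_pos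
  have hm0 : 0 < m := lt_of_lt_of_le (by positivity) hm
  have hside : ∀ α : I, ∀ s : Finset V, ManyIn s m (NiceFor E G k t m 𝒜 (W \ G.X α)) →
      freq (fun c : V → Γ =>
        ¬ ManyColoured k j c (s \ G.X α) (SettledFor E G k t m 𝒜 W j c))
        ≤ 100 * Fintype.card Γ / m := by
    intro α s hs
    refine freq_not_manyColoured_settled hE hm (fun v hv => hv.2.2) (fun v hv => hv.2.2)
      (fun v hv => hv.2) (hs.mono fun x hx hn => ?_)
    exact ⟨mem_sdiff.2 ⟨hx, (mem_sdiff.1 hn.mem).2⟩, hn.mono sdiff_subset⟩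
  have hsub : ∀ c : V → Γ, ¬ WellColoured E G k t m 𝒜 W j c → ∃ α ∈ 𝒜, ∃ u ∈ G.S α,
      ¬ ManyColoured k j c (outN E u \ G.X α) (SettledFor E G k t m 𝒜 W j c) ∨
      ¬ ManyColoured k j c (inN E u \ G.X α) (SettledFor E G k t m 𝒜 W j c) := by
    intro c hc
    by_contra! hcon
    exact hc hcon
  refine (freq_mono hsub).trans ((freq_exists_le _ _).trans ?_)
  rw [← nsmul_eq_mul]
  refine sum_le_card_nsmul _ _ _ fun α hα => (freq_exists_le _ _).trans ?_
  calc _ ≤ ∑ u ∈ G.S α, 200 * Fintype.card Γ / m := sum_le_sum fun u hu =>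
        (freq_or_le _ _).trans ((add_le_add (hside α _ (h α hα u hu).1)
          (hside α _ (h α hα u hu).2)).trans (le_of_eq (by ring)))
    _ = #(G.S α) * (200 * Fintype.card Γ / m) := by simp
    _ ≤ _ := by
        have : (#(G.S α) : ℝ) ≤ r := by exact_mod_cast hr α hα
        gcongr

open Classical in
lemma WellColoured.stronglyKConnectedOn [DecidableEq I] (hk : 1 ≤ k) (h1 : CondG1 G)
    (h3 : CondG3 E G) (h4 : CondG4 E G) (h𝒜 : #𝒜 = 10 * k) {j : Γ} {c : V → Γ}
    (h : WellColoured E G k t m 𝒜 W j c) :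
    StronglyKConnectedOn E k
      (𝒜.biUnion G.U ∪ ({v | c v = j ∧ SettledFor E G k t m 𝒜 W j c v} : Finset V)) := by
  have hcard : ∀ {s : Finset V} {p : V → Prop}, ManyColoured k j c s p →
      k < #(s ∩ ({v | c v = j ∧ p v} : Finset V)) := by
    intro s p hs
    rw [inter_filter, inter_univ]
    exact hs
  refine stronglyKConnectedOn_biUnion_union E G hk h1 h3 h4 h𝒜
    (A₁ := {v | c v = j ∧ Nice1 E G k t 𝒜 W v})
    (A₂ := {v | c v = j ∧ LinkedOut E k j (Nice1 E G k t 𝒜 W) (Nice2 E G k t m 𝒜 W) c v})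
    (monotone_filter_right _ fun v _ hv => ⟨hv.1, Or.inl hv.2⟩)
    (monotone_filter_right _ fun v _ hv => ⟨hv.1, Or.inl hv.2⟩)
    (fun v hv => (mem_filter.1 hv).2.2.2.2) ?_ ?_ ?_
    (fun α hα u hu => ⟨hcard (h α hα u hu).1, hcard (h α hα u hu).2⟩)
  · intro v hv
    rcases (mem_filter.1 hv).2.2 with hv | hv
    · exact hv.2.1
    · exact hv.1.2.1
  · intro v hv
    rcases (mem_filter.1 hv).2.2 with (hv | hv) | hv | hv
    · exact Or.inl hv.2.2
    · exact Or.inr (hcard hv.2)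
    · exact Or.inl hv.1.2.1
    · exact Or.inr (hcard hv.2.1)
  · intro v hv
    rcases (mem_filter.1 hv).2.2 with (hv | hv) | hv | hv
    · exact Or.inl hv.2.1
    · exact Or.inl hv.1.2.1
    · exact Or.inr (hcard hv.2)
    · exact Or.inr (hcard hv.2.2)

lemma card_large_le {ι : Type*} [Fintype ι] [DecidableEq ι] (Y : ι → Finset V)
    (hY : ∀ i j, i ≠ j → Disjoint (Y i) (Y j)) (s : ℕ) :
    #{i | Fintype.card V < s * #(Y i)} ≤ s := by
  rcases (Fintype.card V).eq_zero_or_pos with h0 | h0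
  · have : ∀ i, Y i = ∅ := fun i => card_eq_zero.1 (by have := card_le_univ (Y i); omega)
    simp [this]
  refine Nat.le_of_mul_le_mul_right ?_ h0
  calc #{i | Fintype.card V < s * #(Y i)} * Fintype.card V
      ≤ ∑ i with Fintype.card V < s * #(Y i), s * #(Y i) :=
        card_nsmul_le_sum _ _ _ fun i hi => (mem_filter.1 hi).2.le
    _ = s * #((univ.filter fun i => Fintype.card V < s * #(Y i)).biUnion Y) := by
        rw [card_biUnion fun i _ j _ h => hY i j h, mul_sum]
    _ ≤ s * Fintype.card V := by gcongr; exact card_le_univ _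

/-- There is a colouring in which few vertices receive a colour `(i, 0)` and few indices `i`
are not well coloured. -/
lemma exists_colouring [Nonempty V] {r : ℕ} (hr : 0 < r)
    (bad : Fin r → (V → Fin r × Fin 100) → Prop)
    (hbad : ∀ i, freq (bad i) ≤ 1 / 50) :
    ∃ c : V → Fin r × Fin 100, (50 * #{v | (c v).2 = 0} < Fintype.card V) ∧
      ∃ s : Finset (Fin r), 10 * #s < r ∧ ∀ i ∉ s, ¬ bad i c := by
  classical
  have : Nonempty (Fin r) := ⟨⟨0, hr⟩⟩
  have hr' : (0 : ℝ) < r := by exact_mod_cast hr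
  have hn : (0 : ℝ) < Fintype.card V := by exact_mod_cast Fintype.card_pos
  have hcol : ∀ v : V, freq (fun c : V → Fin r × Fin 100 => (c v).2 = 0) ≤ 1 / 100 := by
    intro v
    refine (freq_mono (q := fun c => ∃ i ∈ (univ : Finset (Fin r)), c v = (i, 0))
      fun c hc => ⟨(c v).1, mem_univ _, Prod.ext rfl hc⟩).trans ((freq_exists_le _ _).trans ?_)
    simp only [freq_colour]
    simp only [sum_const, card_univ, Fintype.card_fin, Fintype.card_prod, nsmul_eq_mul]
    push_cast
    apply le_of_eq
    field_simp
  have h1 := (freq_le_card_filter_mul_le univ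
    (fun v (c : V → Fin r × Fin 100) => (c v).2 = 0) (Fintype.card V / 50)).trans
    (sum_le_card_nsmul univ _ _ fun v _ => hcol v)
  have h2 := (freq_le_card_filter_mul_le univ bad (r / 10)).trans
    (sum_le_card_nsmul univ _ _ fun i _ => hbad i)
  simp only [card_univ, nsmul_eq_mul, Fintype.card_fin] at h1 h2
  have h1' : freq (fun c : V → Fin r × Fin 100 =>
      (Fintype.card V / 50 : ℝ) ≤ #{v | (c v).2 = 0}) ≤ 1 / 2 := by
    refine le_of_mul_le_mul_right (h1.trans (le_of_eq ?_))
      (show (0 : ℝ) < Fintype.card V / 50 by positivity)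
    ring
  have h2' : freq (fun c : V → Fin r × Fin 100 => (r / 10 : ℝ) ≤ #{i | bad i c}) ≤ 1 / 5 := by
    refine le_of_mul_le_mul_right (h2.trans (le_of_eq ?_))
      (show (0 : ℝ) < r / 10 by positivity)
    ring
  obtain ⟨c, hc⟩ := exists_not_of_freq_lt_one
    (((freq_or_le _ _).trans (add_le_add h1' h2')).trans_lt (by norm_num))
  push Not at hc
  refine ⟨c, ?_, univ.filter fun i => bad i c, ?_, by simp⟩
  · have := hc.1
    rw [lt_div_iff₀ (by norm_num)] at this
    rw [mul_comm]
    exact_mod_cast this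
  · have := hc.2
    rw [lt_div_iff₀ (by norm_num)] at this
    rw [mul_comm]
    exact_mod_cast this

end Groups

/-- Proposition 4.14: many connected sets. -/
theorem statement17 :
    ∃ C : ℕ, ∀ (τ₁ τ₂ τ₃ k t : ℕ),
      C ≤ τ₃ → C * τ₃ ≤ τ₂ → C * τ₂ ≤ τ₁ → C * τ₁ ≤ k → 2 ≤ t →
      ∀ (V : Type) [Fintype V] [DecidableEq V] (E : V → V → Prop) [DecidableRel E],
        IsTournament E → StronglyKConnected E (τ₁ * k * t) →
        ∀ G : GadgetSystem V (Fin (sigma1 * k * t)),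
          GadgetHyp E G k t → GadgetHyp2 E G k t τ₁ →
          ∀ (𝒜₃ : Finset (Fin (sigma1 * k * t)))
            (B : Fin (sigma3 * t) → Finset (Fin (sigma1 * k * t))),
            (∀ i j : Fin (sigma3 * t), i ≠ j → Disjoint (B i) (B j)) →
            Finset.univ.biUnion B = 𝒜₃ →
            (∀ i, (B i).card = 10 * k) →
            (∀ i, ∀ α ∈ B i, ∀ u ∈ G.S α,
              ManyIn (outN E u) ((τ₃ * k * t : ℕ) : ℝ)
                (Eligible E G k t τ₃ (B i) (Wof G (𝒜₃ \ B i) \ G.X α)) ∧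
              ManyIn (inN E u) ((τ₃ * k * t : ℕ) : ℝ)
                (Eligible E G k t τ₃ (B i) (Wof G (𝒜₃ \ B i) \ G.X α))) →
            (∀ i, ManyIn (Vgood E G k t ∩ Wof G 𝒜₃) ((Fintype.card V : ℝ) / 10)
              (Eligible E G k t τ₃ (B i) (Wof G 𝒜₃))) →
            ∃ P : Fin t → Finset V,
              (∀ i j : Fin t, i ≠ j → Disjoint (P i) (P j)) ∧
              (∀ i, 2 * k ≤ (P i).card ∧
                ((P i).card : ℝ) ≤ (Fintype.card V : ℝ) / t) ∧
              (∀ i, StronglyKConnectedOn E k (P i)) ∧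
              (∀ i, ∃ B' : Finset (Fin (sigma1 * k * t)), B' ⊆ 𝒜₃ ∧
                10 * k ≤ B'.card ∧ ∀ α ∈ B', G.U α ⊆ P i) ∧
              (∀ i, ManyIn
                ((Finset.univ \ Finset.univ.biUnion P) ∩ Vgood E G k t)
                ((Fintype.card V : ℝ) / 100)
                (fun u => k ≤ (outN E u ∩ P i).card ∧ k ≤ (inN E u ∩ P i).card)) := by
  classical
  refine ⟨10 ^ 13, ?_⟩
  intro τ₁ τ₂ τ₃ k t hτ₃ hτ₂ hτ₁ hkτ ht V _ _ E _ hE hconn G hG _ 𝒜₃ B hBdisj hBun hBcard hS hgood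
  obtain ⟨h1, h2, h3, h4, -⟩ := hG
  have hk : 1 ≤ k := by omega
  have hV : 0 < Fintype.card V := by
    have := hconn.1
    rw [card_univ] at this
    omega
  have : Nonempty V := Fintype.card_pos_iff.1 hV
  have hr : 0 < sigma3 * t := by simp only [sigma3]; omega
  have : Nonempty (Fin (sigma3 * t)) := ⟨⟨0, hr⟩⟩
  set m : ℝ := ((τ₃ * k * t : ℕ) : ℝ) with hm_def
  let W : Fin (sigma3 * t) → Finset V := fun i => Wof G (𝒜₃ \ B i)
  let bad : Fin (sigma3 * t) → (V → Fin (sigma3 * t) × Fin 100) → Prop := fun i c =>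
    ¬ WellColoured E G k t m (B i) (W i) (i, 0) c
  have hcolours : (Fintype.card (Fin (sigma3 * t) × Fin 100) : ℝ) = 1000 * t := by
    rw [Fintype.card_prod, Fintype.card_fin, Fintype.card_fin]
    push_cast [sigma3]
    ring
  have hτ₃' : (10 : ℝ) ^ 13 ≤ τ₃ := by exact_mod_cast hτ₃
  have hk' : (1 : ℝ) ≤ k := by exact_mod_cast hk
  have ht' : (2 : ℝ) ≤ t := by exact_mod_cast ht
  have hbad : ∀ i, freq (bad i) ≤ 1 / 50 := by
    intro i
    refine (freq_not_wellColoured_le (i, 0) (r := rho) hE.1 ?_ (fun α _ => (h2 α).1)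
      (hS i)).trans ?_
    · rw [hcolours, hm_def]
      push_cast
      have : (0 : ℝ) ≤ k * t := by positivity
      nlinarith
    · rw [hcolours, hBcard, hm_def]
      push_cast [rho]
      rw [← mul_assoc, ← mul_div_assoc, div_le_iff₀ (by positivity)]
      have : (0 : ℝ) ≤ k * t := by positivity
      nlinarith
  obtain ⟨c, hc, s, hs, hcs⟩ := exists_colouring hr bad hbad
  let Y : Fin (sigma3 * t) → Finset V := fun i => (B i).biUnion G.U
  let N : Fin (sigma3 * t) → Finset V := fun i => {v | c v = (i, 0)}
  let A : Fin (sigma3 * t) → Finset V := fun i =>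
    {v | c v = (i, 0) ∧ SettledFor E G k t m (B i) (W i) (i, 0) c v}
  have hAN : ∀ i, A i ⊆ N i := fun i => monotone_filter_right _ fun _ _ h => h.1
  have hAW : ∀ i, A i ⊆ W i := fun i x hx => (mem_filter.1 hx).2.2.mem
  have hYdisj : ∀ i j, i ≠ j → Disjoint (Y i) (Y j) := by
    intro i j hij
    simp only [Y, disjoint_biUnion_left, disjoint_biUnion_right]
    intro α hα β hβ
    exact h1 β α fun h => disjoint_left.1 (hBdisj i j hij) (h ▸ hβ) hα
  have hNdisj : ∀ i j, i ≠ j → Disjoint (N i) (N j) := by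
    intro i j hij
    rw [disjoint_left]
    intro x hx hx'
    exact hij (congrArg Prod.fst ((mem_filter.1 hx).2.symm.trans (mem_filter.1 hx').2))
  have hYA : ∀ i j, i ≠ j → Disjoint (Y i) (A j) := by
    intro i j hij
    rw [disjoint_left]
    intro x hx hxA
    obtain ⟨α, hα, hxα⟩ := mem_biUnion.1 hx
    refine (mem_sdiff.1 (hAW j hxA)).2 (mem_biUnion.2 ⟨α, mem_sdiff.2 ⟨?_, ?_⟩, hxα⟩)
    · exact hBun ▸ mem_biUnion.2 ⟨i, mem_univ _, hα⟩
    · exact disjoint_left.1 (hBdisj i j hij) hα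
  have hlargeY := card_large_le Y hYdisj (2 * t)
  have hlargeN := card_large_le N hNdisj (2 * t)
  let large : Finset (Fin (sigma3 * t)) :=
    s ∪ (univ.filter (fun i => Fintype.card V < 2 * t * #(Y i)) ∪
      univ.filter (fun i => Fintype.card V < 2 * t * #(N i)))
  have hlarge : t ≤ #(largeᶜ) := by
    have := (card_union_le s _).trans (Nat.add_le_add_left ((card_union_le
      (univ.filter (fun i => Fintype.card V < 2 * t * #(Y i)))
      (univ.filter (fun i => Fintype.card V < 2 * t * #(N i)))).trans
        (Nat.add_le_add hlargeY hlargeN)) #s)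
    have hl : #large ≤ #s + (2 * t + 2 * t) := this
    have hcompl := card_add_card_compl large
    rw [Fintype.card_fin] at hcompl
    simp only [sigma3] at hs hcompl hl ⊢
    omega
  obtain ⟨J, hJ, hJcard⟩ := exists_subset_card_eq hlarge
  let f := J.orderEmbOfFin hJcard
  have hf : ∀ i, f i ∉ s ∧ 2 * t * #(Y (f i)) ≤ Fintype.card V ∧
      2 * t * #(N (f i)) ≤ Fintype.card V := by
    intro i
    have := hJ (J.orderEmbOfFin_mem hJcard i)
    simp only [large, mem_compl, mem_union, mem_filter, mem_univ, true_and, not_or,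
      not_lt] at this
    exact this
  have hYsub : ∀ i, ∀ α ∈ B i, G.U α ⊆ Y i ∪ A i := fun i α hα =>
    (subset_biUnion_of_mem G.U hα).trans subset_union_left
  refine ⟨fun i => Y (f i) ∪ A (f i), ?_, ?_, ?_, ?_, ?_⟩
  · intro i j hij
    have hfij : f i ≠ f j := f.injective.ne hij
    rw [disjoint_union_left, disjoint_union_right, disjoint_union_right]
    exact ⟨⟨hYdisj _ _ hfij, hYA _ _ hfij⟩, (hYA _ _ hfij.symm).symm,
      (hNdisj _ _ hfij).mono (hAN _) (hAN _)⟩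
  · intro i
    obtain ⟨-, hYi, hNi⟩ := hf i
    have hlow : #(B (f i)) ≤ #(Y (f i) ∪ A (f i)) := card_le_card_of_meets G h1 fun α hα =>
      ⟨G.sp α, G.S_subset α (G.sp_mem α), hYsub _ α hα (G.S_subset α (G.sp_mem α))⟩
    rw [hBcard] at hlow
    beta_reduce
    refine ⟨by omega, ?_⟩
    rw [le_div_iff₀ (by linarith)]
    have h5 : #(Y (f i) ∪ A (f i)) ≤ #(Y (f i)) + #(N (f i)) :=
      (card_union_le _ _).trans (Nat.add_le_add_left (card_le_card (hAN _)) _)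
    have h6 : #(Y (f i) ∪ A (f i)) * t ≤ Fintype.card V := by nlinarith
    exact_mod_cast h6
  · intro i
    have hwell : WellColoured E G k t m (B (f i)) (W (f i)) (f i, 0) c :=
      not_not.1 (hcs _ (hf i).1)
    convert hwell.stronglyKConnectedOn hk h1 h3 h4 (hBcard _)
  · intro i
    exact ⟨B (f i), hBun ▸ subset_biUnion_of_mem B (mem_univ _), (hBcard _).ge, hYsub _⟩
  · intro i
    obtain ⟨H, hHsub, hHcard, hH⟩ := hgood (f i)
    refine ⟨H \ univ.filter (fun v => (c v).2 = 0), ?_, ?_, ?_⟩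
    · intro x hx
      obtain ⟨hxH, hxc⟩ := mem_sdiff.1 hx
      obtain ⟨hxgood, hxW⟩ := mem_inter.1 (hHsub hxH)
      refine mem_inter.2 ⟨mem_sdiff.2 ⟨mem_univ _, fun hxP => ?_⟩, hxgood⟩
      obtain ⟨j, -, hj⟩ := mem_biUnion.1 hxP
      rcases mem_union.1 hj with hj | hj
      · obtain ⟨α, hα, hxα⟩ := mem_biUnion.1 hj
        exact (mem_sdiff.1 hxW).2 (mem_biUnion.2
          ⟨α, hBun ▸ mem_biUnion.2 ⟨_, mem_univ _, hα⟩, hxα⟩)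
      · exact hxc (mem_filter.2 ⟨mem_univ _, by rw [(mem_filter.1 hj).2.1]⟩)
    · have h5 : #H ≤ #(H \ univ.filter fun v => (c v).2 = 0)
          + #(univ.filter fun v => (c v).2 = 0) := by
        have := le_card_sdiff (univ.filter fun v => (c v).2 = 0) H
        omega
      have h5' : (#H : ℝ) ≤ #(H \ univ.filter fun v => (c v).2 = 0)
          + #(univ.filter fun v => (c v).2 = 0) := by exact_mod_cast h5
      have hc' : (50 : ℝ) * #(univ.filter fun v => (c v).2 = 0) < Fintype.card V := by
        exact_mod_cast hc
      have : (0 : ℝ) < Fintype.card V := by exact_mod_cast hV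
      linarith
    · intro x hx
      have hxH := (mem_sdiff.1 hx).1
      obtain ⟨-, hmo, hmi⟩ :=
        NiceFor.nice1_of_mem_Vgood (hH x hxH) (mem_inter.1 (hHsub hxH)).1
      have hout : #(B (f i) \ MissOut E G (B (f i)) x)
          ≤ #(outN E x ∩ (Y (f i) ∪ A (f i))) := by
        refine card_le_card_of_meets G h1 fun α hα => ?_
        simp only [MissOut, mem_sdiff, mem_filter, not_and, not_forall, not_not] at hα
        obtain ⟨y, hy, hxy⟩ := hα.2 hα.1
        have hyU := G.S_subset α (G.Sm_subset α hy)
        exact ⟨y, hyU, mem_inter.2 ⟨by simpa [outN] using hxy, hYsub _ α hα.1 hyU⟩⟩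
      have hin : #(B (f i) \ MissIn E G (B (f i)) x)
          ≤ #(inN E x ∩ (Y (f i) ∪ A (f i))) := by
        refine card_le_card_of_meets G h1 fun α hα => ?_
        simp only [MissIn, mem_sdiff, mem_filter, not_and, not_forall, not_not] at hα
        obtain ⟨y, hy, hxy⟩ := hα.2 hα.1
        have hyU := G.S_subset α (G.Sp_subset α hy)
        exact ⟨y, hyU, mem_inter.2 ⟨by simpa [inN] using hxy, hYsub _ α hα.1 hyU⟩⟩
      have h5 := le_card_sdiff (MissOut E G (B (f i)) x) (B (f i))
      have h6 := le_card_sdiff (MissIn E G (B (f i)) x) (B (f i))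
      rw [hBcard] at h5 h6
      beta_reduce
      exact ⟨by omega, by omega⟩

end TournamentPartition
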